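/- arXiv:1107.4838 — 5 statements merged into one kernel-verified Lean document; each statement's English description precedes it below -/
import Mathlib

section
/- For a constrained potential game Γ satisfying Assumption 1, the family of Markov chains {P^ε} on B induced by PHPIP is a regular perturbation of the unperturbed chain {P⁰}: (A1) there exists ε* > 0 such that P^ε is irreducible and aperiodic for all ε ∈ (0, ε*]; (A2) lim_{ε→0} P^ε_{xy} = P⁰_{xy} for all x, y ∈ B; (A3) whenever P^ε_{xy} > 0 for some ε, there exists a real number χ(x→y) ≥ 0 such that lim_{ε→0} P^ε_{xy}/ε^{χ(x→y)} ∈ (0, ∞). -/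
/-!
For `ε ∈ (0,1)` every agent plays every action of `R i (a1 i)` with positive probability, and as a
function of `ε` that probability is one of `1 - ε`, `ε / c`, `(1 - ε) κ ε^Δ`, `(1 - ε)(1 - κ ε^Δ)`
with `c, Δ > 0` (`agentProb_cases`). Everything follows from this list.

* Each of the four forms is positive on `(0,1)`, so the transitions between states of B are exactly
  the feasible steps `(a, b) → (b, c)`, whatever `ε`. These connect B: the agents can be moved to
  their targets one at a time, since staying put is feasible (`reach_joint`). A return path to
  `(a, b)` through `(b, b)`, which has a self-loop, can be lengthened by one step, so the period
  is `1`.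
* Each form is continuous at `ε = 0`; so is their product.
* Each form divided by a suitable power (`ε^0`, `ε^1`, `ε^Δ`, `ε^0` respectively) has a positive
  limit, and resistances add under products (`HasOrder.prod`).
-/

open Finset Filter Topology
open scoped Classical

namespace PIPIPGame

variable {n : ℕ}

section Defs

variable (A : Fin n → Type) [∀ i, Fintype (A i)] [∀ i, DecidableEq (A i)]
  (U : Fin n → (∀ i, A i) → ℝ) (R : ∀ i, A i → Finset (A i))

/-- Assumption 1: reversibility, feasibility, and at least three available actions. -/
def Assumption1 : Prop :=
  (∀ (i : Fin n) (a b : A i), b ∈ R i a ↔ a ∈ R i b) ∧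
  (∀ (i : Fin n) (a b : A i), Relation.ReflTransGen (fun x y => y ∈ R i x) a b) ∧
  (∀ (i : Fin n) (a : A i), 3 ≤ (R i a).card)

/-- Assumption 2: unilateral feasible deviations change the utility by less than 1. -/
def Assumption2 : Prop :=
  ∀ (i : Fin n) (a a' : ∀ j, A j), a' i ∈ R i (a i) → (∀ j, j ≠ i → a' j = a j) →
    U i a' - U i a < 1

/-- `φ` is a potential function for the constrained game. -/
def IsPotential (φ : (∀ j, A j) → ℝ) : Prop :=
  ∀ (i : Fin n) (a a' : ∀ j, A j), a' i ∈ R i (a i) → (∀ j, j ≠ i → a' j = a j) →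
    U i a' - U i a = φ a' - φ a

/-- `C = max_i max_{a_i} |R_i(a_i)|`. -/
noncomputable def Cmax : ℕ :=
  Finset.univ.sup fun i : Fin n => Finset.univ.sup fun a : A i => (R i a).card

/-- Membership in the state space B. -/
def InB (z : (∀ j, A j) × (∀ j, A j)) : Prop := ∀ i, z.2 i ∈ R i (z.1 i)

/-- The probability that agent `i` chooses `b` under PHPIP with exploration rate `ε`
and parameter `κ`, the previous two joint actions being `a0, a1`. -/
noncomputable def agentProb (ε κ : ℝ) (a0 a1 : ∀ j, A j) (i : Fin n) (b : A i) : ℝ :=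
  if U i a0 ≤ U i a1 then
    (if b = a1 i then 1 - ε else 0)
    + (if b ∈ R i (a1 i) \ {a1 i} then ε / ((R i (a1 i) \ {a1 i}).card : ℝ) else 0)
  else
    (if b = a1 i then (1 - ε) * (κ * ε ^ (U i a0 - U i a1)) else 0)
    + (if b = a0 i then (1 - ε) * (1 - κ * ε ^ (U i a0 - U i a1)) else 0)
    + (if b ∈ R i (a1 i) \ {a0 i, a1 i} then
        ε / ((R i (a1 i) \ {a0 i, a1 i}).card : ℝ) else 0)

/-- One-step transition probability of the PHPIP chain on pairs of joint actions. -/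
noncomputable def transP (ε κ : ℝ) (z z' : (∀ j, A j) × (∀ j, A j)) : ℝ :=
  if z'.1 = z.2 then ∏ i, agentProb A U R ε κ z.1 z.2 i (z'.2 i) else 0

/-- Probability of a path (a list of states) as a product of step transition probabilities. -/
noncomputable def pathProb (ε κ : ℝ) (l : List ((∀ j, A j) × (∀ j, A j))) : ℝ :=
  ((l.zip l.tail).map fun p => transP A U R ε κ p.1 p.2).prod

/-- `l` is a positive-probability path of the family `{P^ε}` from `z` to `z'`. -/
def IsPath (κ : ℝ) (z z' : (∀ j, A j) × (∀ j, A j))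
    (l : List ((∀ j, A j) × (∀ j, A j))) : Prop :=
  l.head? = some z ∧ l.getLast? = some z' ∧
  l.Chain' (fun x y => ∃ ε, ε ∈ Set.Ioo (0 : ℝ) 1 ∧ 0 < transP A U R ε κ x y)

/-- `lam` is the resistance of the path `l`: `P^ε(l)/ε^lam` tends to a positive limit
as `ε → 0+`. -/
def HasResistance (κ : ℝ) (l : List ((∀ j, A j) × (∀ j, A j))) (lam : ℝ) : Prop :=
  0 ≤ lam ∧ ∃ L : ℝ, 0 < L ∧
    Tendsto (fun ε : ℝ => pathProb A U R ε κ l / ε ^ lam) (𝓝[>] (0 : ℝ)) (𝓝 L)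

/-- Accessibility by positive-probability transitions of `P^ε`. -/
def Accessible (ε κ : ℝ) (x y : (∀ j, A j) × (∀ j, A j)) : Prop :=
  Relation.ReflTransGen (fun u v => 0 < transP A U R ε κ u v) x y

/-- A recurrent communication class of `P^ε` (contained in the state space B). -/
def IsRecurrentClass (ε κ : ℝ) (S : Set ((∀ j, A j) × (∀ j, A j))) : Prop :=
  S.Nonempty ∧ (∀ x ∈ S, InB A R x) ∧
  (∀ x ∈ S, ∀ y ∈ S, Accessible A U R ε κ x y) ∧
  (∀ x ∈ S, ∀ y, Accessible A U R ε κ x y → y ∈ S)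

/-- `m`-step transition probability of `P^ε` on B. -/
noncomputable def mstep (ε κ : ℝ) : ℕ → ((∀ j, A j) × (∀ j, A j)) → ((∀ j, A j) × (∀ j, A j)) → ℝ
  | 0, z, z' => if z = z' then 1 else 0
  | (m+1), z, z' => ∑ y ∈ Finset.univ.filter (InB A R),
      mstep ε κ m z y * transP A U R ε κ y z'

/-- `(a, a')` is an edge of `E_single`: exactly one agent changes its action,
and the change is feasible. -/
def ESingle (a a' : ∀ j, A j) : Prop :=
  ∃ i : Fin n, a' i ≠ a i ∧ a' i ∈ R i (a i) ∧ ∀ j, j ≠ i → a' j = a j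

/-- Agent `i` can go from `a` to `b` in exactly `k` feasible steps. -/
def reachesIn (i : Fin n) : ℕ → A i → A i → Prop
  | 0, a, b => a = b
  | (k+1), a, b => ∃ c ∈ R i a, reachesIn i k c b

/-- The minimal number of steps needed by agent `i` to move from `a` to `b`. -/
noncomputable def minSteps (i : Fin n) (a b : A i) : ℕ :=
  sInf {k : ℕ | reachesIn A R i k a b}

/-- `D = max_i D_i`. -/
noncomputable def Dmax : ℕ :=
  Finset.univ.sup fun i : Fin n =>
    Finset.univ.sup fun p : A i × A i => minSteps A R i p.1 p.2

/-- The PIPIP exploration rate `ε(t) = t^{-1/(n(D+1))}`. -/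
noncomputable def epsRate (t : ℕ) : ℝ :=
  (t : ℝ) ^ (-(1 : ℝ) / (n * (Dmax A R + 1)))

end Defs

end PIPIPGame

open PIPIPGame Finset Filter Topology

namespace PIPIPGame

section Proof

/-! ### Orders of vanishing at `0+` -/

/-- `f ε / ε ^ χ` has a positive limit as `ε → 0+`, for some exponent `χ ≥ 0`. -/
def HasOrder (f : ℝ → ℝ) : Prop :=
  ∃ χ : ℝ, 0 ≤ χ ∧ ∃ L : ℝ, 0 < L ∧ Tendsto (fun ε : ℝ => f ε / ε ^ χ) (𝓝[>] (0 : ℝ)) (𝓝 L)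

theorem HasOrder.prod {ι : Type*} [Fintype ι] {f : ι → ℝ → ℝ} (h : ∀ i, HasOrder (f i)) :
    HasOrder (fun ε => ∏ i, f i ε) := by
  choose χ hχ L hL ht using h
  refine ⟨∑ i, χ i, Finset.sum_nonneg fun i _ => hχ i, ∏ i, L i,
    Finset.prod_pos fun i _ => hL i, ?_⟩
  refine (tendsto_finsetProd Finset.univ fun i _ => ht i).congr' ?_
  filter_upwards [self_mem_nhdsWithin] with ε hε
  rw [Finset.prod_div_distrib, Real.rpow_sum_of_pos hε]

theorem hasOrder_of_eq {f g : ℝ → ℝ} {χ : ℝ} (hχ : 0 ≤ χ) (hg : ContinuousAt g 0) (h0 : 0 < g 0)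
    (hfg : ∀ ε, 0 < ε → f ε = g ε * ε ^ χ) : HasOrder f := by
  refine ⟨χ, hχ, g 0, h0, (hg.tendsto.mono_left nhdsWithin_le_nhds).congr' ?_⟩
  filter_upwards [self_mem_nhdsWithin] with ε hε
  rw [hfg ε hε, mul_div_cancel_right₀ _ (Real.rpow_pos_of_pos hε χ).ne']

/-! ### Choice probabilities of one agent -/

variable {n : ℕ} {A : Fin n → Type} [∀ i, Fintype (A i)] [∀ i, DecidableEq (A i)]
  {U : Fin n → (∀ i, A i) → ℝ} {R : ∀ i, A i → Finset (A i)} {κ : ℝ}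

/-- The four possible shapes of the probability of a feasible action: repeating an action that was
no worse (or the same as before), exploring, keeping a worse action, and returning to the better one. -/
theorem agentProb_cases (U : Fin n → (∀ i, A i) → ℝ) (κ : ℝ) (a0 a1 : ∀ j, A j) (i : Fin n)
    (b : A i) (hb : b ∈ R i (a1 i)) :
    (∀ ε, agentProb A U R ε κ a0 a1 i b = 1 - ε) ∨
    (∃ c : ℝ, 0 < c ∧ ∀ ε, agentProb A U R ε κ a0 a1 i b = ε / c) ∨
    (∃ Δ : ℝ, 0 < Δ ∧ ∀ ε, agentProb A U R ε κ a0 a1 i b = (1 - ε) * (κ * ε ^ Δ)) ∨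
    (∃ Δ : ℝ, 0 < Δ ∧ ∀ ε, agentProb A U R ε κ a0 a1 i b = (1 - ε) * (1 - κ * ε ^ Δ)) := by
  by_cases hU : U i a0 ≤ U i a1
  · by_cases h : b = a1 i
    · left
      intro ε
      simp [agentProb, hU, h]
    · right; left
      have hm : b ∈ R i (a1 i) \ {a1 i} := by simp [hb, h]
      refine ⟨((R i (a1 i) \ {a1 i}).card : ℝ), ?_, fun ε => ?_⟩
      · exact_mod_cast Finset.card_pos.2 ⟨b, hm⟩
      · rw [agentProb, if_pos hU, if_neg h, if_pos hm, zero_add]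
  · have hΔ : 0 < U i a0 - U i a1 := by linarith
    by_cases h : b = a1 i <;> by_cases h' : b = a0 i
    · left
      intro ε
      have hm : b ∉ R i (a1 i) \ {a0 i, a1 i} := by simp [h]
      rw [agentProb, if_neg hU, if_pos h, if_pos h', if_neg hm]
      ring
    · right; right; left
      refine ⟨_, hΔ, fun ε => ?_⟩
      have hm : b ∉ R i (a1 i) \ {a0 i, a1 i} := by simp [h]
      rw [agentProb, if_neg hU, if_pos h, if_neg h', if_neg hm]
      ring
    · right; right; right
      refine ⟨_, hΔ, fun ε => ?_⟩
      have hm : b ∉ R i (a1 i) \ {a0 i, a1 i} := by simp [h']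
      rw [agentProb, if_neg hU, if_neg h, if_pos h', if_neg hm]
      ring
    · right; left
      have hm : b ∈ R i (a1 i) \ {a0 i, a1 i} := by simp [hb, h, h']
      refine ⟨((R i (a1 i) \ {a0 i, a1 i}).card : ℝ), ?_, fun ε => ?_⟩
      · exact_mod_cast Finset.card_pos.2 ⟨b, hm⟩
      · rw [agentProb, if_neg hU, if_neg h, if_neg h', if_pos hm, zero_add, zero_add]

theorem continuousAt_rpow_zero {Δ : ℝ} (hΔ : 0 < Δ) : ContinuousAt (fun ε : ℝ => ε ^ Δ) 0 :=
  Real.continuousAt_rpow_const 0 Δ (Or.inr hΔ.le)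

theorem agentProb_pos {ε : ℝ} (hε : 0 < ε) (hε1 : ε < 1) (hκ : 0 < κ) (hκ2 : κ ≤ 1 / 2)
    (a0 a1 : ∀ j, A j) (i : Fin n) (b : A i) (hb : b ∈ R i (a1 i)) :
    0 < agentProb A U R ε κ a0 a1 i b := by
  have h1 : 0 < 1 - ε := by linarith
  rcases agentProb_cases U κ a0 a1 i b hb with h | ⟨c, hc, h⟩ | ⟨Δ, hΔ, h⟩ | ⟨Δ, hΔ, h⟩ <;>
    rw [h ε]
  · exact h1
  · positivity
  · have := Real.rpow_pos_of_pos hε Δ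
    positivity
  · have h2 := Real.rpow_pos_of_pos hε Δ
    have h3 := Real.rpow_lt_one hε.le hε1 hΔ
    refine mul_pos h1 ?_
    nlinarith

theorem agentProb_continuousAt (a0 a1 : ∀ j, A j) (i : Fin n) (b : A i) (hb : b ∈ R i (a1 i)) :
    ContinuousAt (fun ε => agentProb A U R ε κ a0 a1 i b) 0 := by
  rcases agentProb_cases U κ a0 a1 i b hb with h | ⟨c, hc, h⟩ | ⟨Δ, hΔ, h⟩ | ⟨Δ, hΔ, h⟩ <;>
    simp only [h]
  · fun_prop
  · fun_prop
  · have := continuousAt_rpow_zero hΔ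
    fun_prop
  · have := continuousAt_rpow_zero hΔ
    fun_prop

theorem agentProb_hasOrder (hκ : 0 < κ) (a0 a1 : ∀ j, A j) (i : Fin n) (b : A i)
    (hb : b ∈ R i (a1 i)) : HasOrder (fun ε => agentProb A U R ε κ a0 a1 i b) := by
  rcases agentProb_cases U κ a0 a1 i b hb with h | ⟨c, hc, h⟩ | ⟨Δ, hΔ, h⟩ | ⟨Δ, hΔ, h⟩ <;>
    simp only [h]
  · exact hasOrder_of_eq (g := fun ε => 1 - ε) le_rfl (by fun_prop) (by simp) (by simp)
  · exact hasOrder_of_eq (g := fun _ => 1 / c) zero_le_one (by fun_prop) (by positivity)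
      (fun ε _ => by rw [Real.rpow_one]; ring)
  · exact hasOrder_of_eq (g := fun ε => (1 - ε) * κ) hΔ.le (by fun_prop) (by simpa using hκ)
      (fun ε _ => by ring)
  · have := continuousAt_rpow_zero hΔ
    exact hasOrder_of_eq (g := fun ε => (1 - ε) * (1 - κ * ε ^ Δ)) le_rfl (by fun_prop)
      (by simp [Real.zero_rpow hΔ.ne']) (by simp)

/-- Since `C ≥ 3` as soon as there are an agent and an action, the lower bound on `κ` is positive.
For a game without agents or actions `κ` may be negative. -/
theorem kappa_pos (h1 : Assumption1 A R) (hκ : 1 / ((Cmax A R : ℝ) - 1) < κ) (i : Fin n) (a : A i) :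
    0 < κ := by
  have h2 : (R i a).card ≤ Cmax A R :=
    (Finset.le_sup (f := fun a : A i => (R i a).card) (Finset.mem_univ a)).trans
      (Finset.le_sup (f := fun i : Fin n => Finset.univ.sup fun a : A i => (R i a).card)
        (Finset.mem_univ i))
  have h3 : (3 : ℝ) ≤ Cmax A R := by exact_mod_cast (h1.2.2 i a).trans h2
  refine lt_trans ?_ hκ
  have : 0 < (Cmax A R : ℝ) - 1 := by linarith
  positivity

/-! ### Feasible steps and connectedness of B -/

/-- A feasible step of the chain on B: `(a, b) → (b, c)` with `(b, c) ∈ B`. -/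
def Step (R : ∀ i, A i → Finset (A i)) (z z' : (∀ j, A j) × (∀ j, A j)) : Prop :=
  z'.1 = z.2 ∧ InB A R z'

theorem transP_pos {ε : ℝ} (hε : 0 < ε) (hε1 : ε < 1) (hκ : ∀ i, A i → 0 < κ) (hκ2 : κ ≤ 1 / 2)
    {z z' : (∀ j, A j) × (∀ j, A j)} (h : Step R z z') : 0 < transP A U R ε κ z z' := by
  rw [transP, if_pos h.1]
  refine Finset.prod_pos fun i _ => agentProb_pos hε hε1 (hκ i (z.1 i)) hκ2 _ _ _ _ ?_
  rw [← h.1]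
  exact h.2 i

theorem transP_nonneg {ε : ℝ} (hε : 0 < ε) (hε1 : ε < 1) (hκ : ∀ i, A i → 0 < κ) (hκ2 : κ ≤ 1 / 2)
    {z z' : (∀ j, A j) × (∀ j, A j)} (h : InB A R z') : 0 ≤ transP A U R ε κ z z' := by
  by_cases h1 : z'.1 = z.2
  · exact (transP_pos hε hε1 hκ hκ2 ⟨h1, h⟩).le
  · rw [transP, if_neg h1]

/-- Any joint action is joined to any other by simultaneous feasible moves: by induction on `s`,
the agents in `s` are moved one after another while the others stay put. -/
theorem reach_joint (hrefl : ∀ i a, a ∈ R i a) (h1 : Assumption1 A R) (a b : ∀ j, A j) :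
    Relation.ReflTransGen (fun x y : ∀ j, A j => ∀ i, y i ∈ R i (x i)) a b := by
  suffices H : ∀ s : Finset (Fin n), Relation.ReflTransGen
      (fun x y : ∀ j, A j => ∀ i, y i ∈ R i (x i)) a (fun j => if j ∈ s then b j else a j) by
    simpa using H Finset.univ
  intro s
  induction s using Finset.induction_on with
  | empty => simpa using Relation.ReflTransGen.refl
  | insert i s hi ih =>
    refine ih.trans ?_
    have hmove : ∀ (x : ∀ j, A j) (u v : A i), Relation.ReflTransGen (fun p q => q ∈ R i p) u v →
        Relation.ReflTransGen (fun x y : ∀ j, A j => ∀ i, y i ∈ R i (x i))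
          (Function.update x i u) (Function.update x i v) := by
      intro x u v huv
      refine Relation.ReflTransGen.lift (Function.update x i) ?_ _ _ huv
      intro p q hpq j
      by_cases hj : j = i
      · subst hj
        simpa using hpq
      · simpa [hj] using hrefl j (x j)
    have key := hmove (fun j => if j ∈ s then b j else a j) (a i) (b i) (h1.2.1 i (a i) (b i))
    convert key using 1
    · ext j
      by_cases hj : j = i
      · subst hj
        simp [hi]
      · simp [hj]
    · ext j
      by_cases hj : j = i
      · subst hj
        simp
      · simp [hj]

/-- B is connected under feasible steps: drive the second component to `z'.1`, then step to `z'`. -/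
theorem step_connected (hrefl : ∀ i a, a ∈ R i a) (h1 : Assumption1 A R)
    (z z' : (∀ j, A j) × (∀ j, A j)) (hz' : InB A R z') :
    Relation.ReflTransGen (Step R) z z' := by
  have H : ∀ b, Relation.ReflTransGen (fun x y : ∀ j, A j => ∀ i, y i ∈ R i (x i)) z.2 b →
      ∃ c, Relation.ReflTransGen (Step R) z (c, b) := by
    intro b hb
    induction hb with
    | refl => exact ⟨z.1, Relation.ReflTransGen.refl⟩
    | @tail p q _ hpq ih =>
      obtain ⟨c, hc⟩ := ih
      exact ⟨p, hc.tail ⟨rfl, hpq⟩⟩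
  obtain ⟨c, hc⟩ := H _ (reach_joint hrefl h1 z.2 z'.1)
  exact hc.tail ⟨rfl, hz'⟩

/-! ### Multi-step probabilities -/

theorem mstep_nonneg {ε : ℝ} (hε : 0 < ε) (hε1 : ε < 1) (hκ : ∀ i, A i → 0 < κ) (hκ2 : κ ≤ 1 / 2)
    (x : (∀ j, A j) × (∀ j, A j)) (m : ℕ) :
    ∀ z, InB A R z → 0 ≤ mstep A U R ε κ m x z := by
  induction m with
  | zero =>
    intro z _
    rw [mstep]
    split_ifs <;> norm_num
  | succ m ih =>
    intro z hz
    rw [mstep]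
    exact Finset.sum_nonneg fun y hy =>
      mul_nonneg (ih y (Finset.mem_filter.1 hy).2) (transP_nonneg hε hε1 hκ hκ2 hz)

theorem mstep_succ_pos {ε : ℝ} (hε : 0 < ε) (hε1 : ε < 1) (hκ : ∀ i, A i → 0 < κ)
    (hκ2 : κ ≤ 1 / 2) {x y z : (∀ j, A j) × (∀ j, A j)} {m : ℕ} (hy : InB A R y)
    (hm : 0 < mstep A U R ε κ m x y) (h : Step R y z) : 0 < mstep A U R ε κ (m + 1) x z := by
  rw [mstep]
  exact Finset.sum_pos' (fun w hw => mul_nonneg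
      (mstep_nonneg hε hε1 hκ hκ2 x m w (Finset.mem_filter.1 hw).2)
      (transP_nonneg hε hε1 hκ hκ2 h.2))
    ⟨y, by simp [hy], mul_pos hm (transP_pos hε hε1 hκ hκ2 h)⟩

/-- A feasible path from `y` to `z` has one length `k` by which all positive-probability paths
ending at `y` can be extended to `z`. -/
theorem mstep_extend {ε : ℝ} (hε : 0 < ε) (hε1 : ε < 1) (hκ : ∀ i, A i → 0 < κ)
    (hκ2 : κ ≤ 1 / 2) {x y z : (∀ j, A j) × (∀ j, A j)} (hy : InB A R y)
    (h : Relation.ReflTransGen (Step R) y z) :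
    InB A R z ∧ ∃ k, ∀ m, 0 < mstep A U R ε κ m x y → 0 < mstep A U R ε κ (m + k) x z := by
  induction h with
  | refl => exact ⟨hy, 0, fun m hm => hm⟩
  | tail _ hs ih =>
    obtain ⟨hB, k, hk⟩ := ih
    exact ⟨hs.2, k + 1, fun m hm => mstep_succ_pos hε hε1 hκ hκ2 hB (hk m hm) hs⟩

end Proof

end PIPIPGame

/-- **Lemma 1 (regular perturbation).** Under Assumption 1, the family `{P^ε}` of PHPIP
chains on B is a regular perturbation of the unperturbed chain `{P⁰}` (which is `transP`
at `ε = 0`): (A1) for some `ε* > 0` the chain is irreducible and aperiodic for all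
`ε ∈ (0, ε*]`; (A2) `P^ε_{xy} → P⁰_{xy}` as `ε → 0`; (A3) whenever `P^ε_{xy} > 0` for
some `ε`, there is `χ(x→y) ≥ 0` with `lim_{ε→0} P^ε_{xy}/ε^{χ(x→y)} ∈ (0, ∞)`. -/
theorem phpip_is_regular_perturbation
    {n : ℕ} (A : Fin n → Type) [∀ i, Fintype (A i)] [∀ i, DecidableEq (A i)]
    (U : Fin n → (∀ i, A i) → ℝ) (R : ∀ i, A i → Finset (A i)) (κ : ℝ)
    (hrefl : ∀ i a, a ∈ R i a)
    (h1 : Assumption1 A R)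
    (hκ : 1 / ((Cmax A R : ℝ) - 1) < κ ∧ κ ≤ 1 / 2) :
    -- (A1): irreducibility and aperiodicity for all small positive ε
    (∃ εstar : ℝ, 0 < εstar ∧ εstar < 1 ∧ ∀ ε, 0 < ε → ε ≤ εstar →
      (∀ z z', InB A R z → InB A R z' → Accessible A U R ε κ z z') ∧
      (∀ z, InB A R z → ∀ d : ℕ,
        (∀ m : ℕ, 0 < m → 0 < mstep A U R ε κ m z z → d ∣ m) → d = 1)) ∧
    -- (A2): convergence of the transition probabilities as ε → 0
    (∀ z z', InB A R z → InB A R z' →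
      Tendsto (fun ε : ℝ => transP A U R ε κ z z') (𝓝[>] (0 : ℝ))
        (𝓝 (transP A U R 0 κ z z'))) ∧
    -- (A3): existence of the resistance of every feasible transition
    (∀ z z', InB A R z → InB A R z' →
      (∃ ε : ℝ, 0 < ε ∧ ε < 1 ∧ 0 < transP A U R ε κ z z') →
      ∃ χ : ℝ, 0 ≤ χ ∧ ∃ L : ℝ, 0 < L ∧
        Tendsto (fun ε : ℝ => transP A U R ε κ z z' / ε ^ χ) (𝓝[>] (0 : ℝ)) (𝓝 L)) := by
  have hκ0 : ∀ i, A i → 0 < κ := kappa_pos h1 hκ.1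
  refine ⟨⟨1 / 2, by norm_num, by norm_num, fun ε hε hε2 => ?_⟩, ?_, ?_⟩
  · have hε1 : ε < 1 := by linarith
    refine ⟨fun z z' _ hz' => ?_, fun z hz d hd => ?_⟩
    · exact Relation.ReflTransGen.mono (fun u v huv => transP_pos hε hε1 hκ0 hκ.2 huv) _ _
        (step_connected hrefl h1 z z' hz')
    · -- Return to `z` through `y = (z.2, z.2)`, using its self-loop or not.
      have hyB : InB A R (z.2, z.2) := fun i => hrefl i _
      obtain ⟨-, k, hk⟩ := mstep_extend (U := U) (x := z) hε hε1 hκ0 hκ.2 hyB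
        (step_connected hrefl h1 (z.2, z.2) z hz)
      have p0 : 0 < mstep A U R ε κ 0 z z := by simp [mstep]
      have p1 : 0 < mstep A U R ε κ 1 z (z.2, z.2) :=
        mstep_succ_pos hε hε1 hκ0 hκ.2 hz p0 ⟨rfl, hyB⟩
      have p2 : 0 < mstep A U R ε κ 2 z (z.2, z.2) :=
        mstep_succ_pos hε hε1 hκ0 hκ.2 hyB p1 ⟨rfl, hyB⟩
      have d1 := hd _ (by omega) (hk 1 p1)
      have d2 := hd _ (by omega) (hk 2 p2)
      have d3 := Nat.dvd_sub d2 d1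
      rw [show 2 + k - (1 + k) = 1 by omega] at d3
      exact Nat.dvd_one.1 d3
  · intro z z' _ hz'
    by_cases h : z'.1 = z.2
    · have hc : ContinuousAt (fun ε => ∏ i, agentProb A U R ε κ z.1 z.2 i (z'.2 i)) 0 :=
        tendsto_finsetProd _ fun i _ => agentProb_continuousAt z.1 z.2 i (z'.2 i) (h ▸ hz' i)
      simp only [transP, if_pos h]
      exact hc.tendsto.mono_left nhdsWithin_le_nhds
    · simp only [transP, if_neg h]
      exact tendsto_const_nhds
  · rintro z z' _ hz' ⟨ε, _, _, hpos⟩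
    have h : z'.1 = z.2 := by
      by_contra h
      rw [transP, if_neg h] at hpos
      exact lt_irrefl _ hpos
    simp only [transP, if_pos h]
    exact HasOrder.prod fun i =>
      agentProb_hasOrder (hκ0 i (z.1 i)) z.1 z.2 i (z'.2 i) (h ▸ hz' i)
end

section
/- For the unperturbed chain {P⁰} associated with PHPIP applied to a constrained potential game Γ, the recurrent communication classes are exactly the singletons {(a,a)} for a ∈ A; that is, every state of diag(A) forms by itself a recurrent communication class of P⁰, and these are all of the recurrent communication classes. -/
/-!
At `ε = 0` the chain is deterministic: it sends a state `z` to `nextState z`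
(`transP_zero_pos_iff`). Diagonal states are fixed, so each is a recurrent class by itself, and
it remains to show that every state reaches the diagonal (`exists_accessible_diag`): a recurrent
class then contains some `(a, a)`, and everything in it is accessible from `(a, a)`.

Call an agent a mover when its two remembered actions differ. An agent can move in the next step
only by reverting its last move, so the set of movers never grows. If the nonempty set of movers
stayed the same for two steps, the joint action would oscillate between two profiles while the
utility of each mover strictly decreased in both directions, which is impossible. Hence the set of
movers shrinks strictly every two steps until it is empty, i.e. until the state is diagonal.
-/

open Finset Filter Topology
open scoped Classical

namespace PIPIPGame

/-- The deterministic successor of a state under the unperturbed chain: agents whose utility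
did not decrease keep their current action, the others return to their previous one. -/
noncomputable def nextState {n : ℕ} (A : Fin n → Type) (U : Fin n → (∀ i, A i) → ℝ)
    (z : (∀ i, A i) × (∀ i, A i)) : (∀ i, A i) × (∀ i, A i) :=
  (z.2, fun i => if U i z.1 ≤ U i z.2 then z.2 i else z.1 i)

/-- The set of agents whose two remembered actions differ. -/
noncomputable def movers {n : ℕ} (A : Fin n → Type)
    (z : (∀ i, A i) × (∀ i, A i)) : Finset (Fin n) :=
  Finset.univ.filter fun i => z.1 i ≠ z.2 i

section Dynamics

variable {n : ℕ} (A : Fin n → Type) (U : Fin n → (∀ i, A i) → ℝ)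

lemma mem_movers (z : (∀ j, A j) × (∀ j, A j)) (i : Fin n) :
    i ∈ movers A z ↔ z.1 i ≠ z.2 i := by
  simp [movers]

lemma nextState_diag (a : ∀ j, A j) : nextState A U (a, a) = (a, a) := by
  simp [nextState]

/-- An agent moves again only by reverting, so no agent starts to move. -/
lemma movers_nextState_subset (z : (∀ j, A j) × (∀ j, A j)) :
    movers A (nextState A U z) ⊆ movers A z := by
  intro i
  simp only [mem_movers, nextState]
  split_ifs <;> simp [eq_comm]

/-- If every mover of `z` moved in both of the next two steps, the joint action would go
`z.1, z.2, z.1, z.2`, and a mover's utility would decrease both from `z.1` to `z.2` and from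
`z.2` to `z.1`. So within two steps some mover stops. -/
lemma movers_nextState_nextState_ssubset (z : (∀ j, A j) × (∀ j, A j))
    (hz : (movers A z).Nonempty) :
    movers A (nextState A U (nextState A U z)) ⊂ movers A z := by
  have h1 := movers_nextState_subset A U z
  have h2 := movers_nextState_subset A U (nextState A U z)
  refine (h2.trans h1).ssubset_of_ne fun heq => ?_
  have e1 : movers A (nextState A U z) = movers A z := h1.antisymm (heq ▸ h2)
  have hback : (nextState A U z).2 = z.1 := by
    funext i
    by_cases hi : i ∈ movers A z
    · have hi' := e1 ▸ hi
      simp only [mem_movers, nextState] at hi' ⊢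
      split_ifs at hi' ⊢ with h
      · exact absurd rfl hi'
      · rfl
    · simp only [mem_movers, not_not] at hi
      simp [nextState, hi]
  obtain ⟨i, hi⟩ := hz
  have hn : nextState A U z = (z.2, z.1) := Prod.ext rfl hback
  have hi1 := e1 ▸ hi
  have hi2 := heq ▸ hi
  rw [hn] at hi2
  simp only [mem_movers, nextState] at hi1 hi2
  have c1 : ¬ U i z.1 ≤ U i z.2 := fun c => hi1 (by rw [if_pos c])
  have c2 : ¬ U i z.2 ≤ U i z.1 := fun c => hi2 (by rw [if_pos c])
  exact lt_asymm (not_le.1 c1) (not_le.1 c2)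

end Dynamics

section Unperturbed

variable {n : ℕ} (A : Fin n → Type) [∀ i, DecidableEq (A i)]
  (U : Fin n → (∀ i, A i) → ℝ) (R : ∀ i, A i → Finset (A i)) (κ : ℝ)

/-- When the utility decreased, the factor `0 ^ (U i a0 - U i a1)` has a positive exponent,
hence is `0`, and returning to `a0 i` has probability one. -/
lemma agentProb_zero (a0 a1 : ∀ j, A j) (i : Fin n) (b : A i) :
    agentProb A U R 0 κ a0 a1 i b =
      if b = (if U i a0 ≤ U i a1 then a1 i else a0 i) then 1 else 0 := by
  unfold agentProb
  by_cases h : U i a0 ≤ U i a1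
  · simp [h]
  · have h0 : (0 : ℝ) ^ (U i a0 - U i a1) = 0 := Real.zero_rpow (by linarith)
    simp [h, h0]

lemma transP_zero_pos_iff (z z' : (∀ j, A j) × (∀ j, A j)) :
    0 < transP A U R 0 κ z z' ↔ z' = nextState A U z := by
  unfold transP nextState
  simp only [agentProb_zero]
  constructor
  · intro h
    split_ifs at h with h1
    · refine Prod.ext h1 (funext fun i => ?_)
      by_contra hne
      exact h.ne' (Finset.prod_eq_zero (Finset.mem_univ i) (if_neg hne))
    · exact absurd h (lt_irrefl _)
  · rintro rfl
    simp

lemma accessible_nextState (z : (∀ j, A j) × (∀ j, A j)) :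
    Accessible A U R 0 κ z (nextState A U z) :=
  Relation.ReflTransGen.single ((transP_zero_pos_iff A U R κ z _).2 rfl)

lemma eq_of_accessible_diag (a : ∀ j, A j) (y : (∀ j, A j) × (∀ j, A j))
    (h : Accessible A U R 0 κ (a, a) y) : y = (a, a) := by
  induction h with
  | refl => rfl
  | tail _ hstep ih =>
    rw [transP_zero_pos_iff, ih, nextState_diag] at hstep
    exact hstep

lemma exists_accessible_diag (z : (∀ j, A j) × (∀ j, A j)) :
    ∃ a, Accessible A U R 0 κ z (a, a) := by
  induction hk : (movers A z).card using Nat.strong_induction_on generalizing z with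
  | _ k ih =>
    rcases (movers A z).eq_empty_or_nonempty with h | h
    · have hz : z = (z.1, z.1) := by
        refine Prod.ext rfl (funext fun i => ?_)
        have hi : i ∉ movers A z := by simp [h]
        rw [mem_movers, not_not] at hi
        exact hi.symm
      exact ⟨z.1, by rw [← hz]; exact Relation.ReflTransGen.refl⟩
    · obtain ⟨a, ha⟩ := ih _
        (hk ▸ Finset.card_lt_card (movers_nextState_nextState_ssubset A U z h)) _ rfl
      exact ⟨a, ((accessible_nextState A U R κ z).trans
        (accessible_nextState A U R κ _)).trans ha⟩

end Unperturbed

end PIPIPGame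

open PIPIPGame Finset Filter Topology

/-- **Lemma 2 (recurrent classes of the unperturbed chain).** For the unperturbed
chain `P⁰` (PHPIP at `ε = 0`) of a constrained potential game, the recurrent
communication classes are exactly the singletons `{(a,a)}`, `a ∈ A`. -/
theorem unperturbed_recurrent_classes_are_diagonal_singletons
    {n : ℕ} (A : Fin n → Type) [∀ i, Fintype (A i)] [∀ i, DecidableEq (A i)]
    (U : Fin n → (∀ i, A i) → ℝ) (R : ∀ i, A i → Finset (A i))
    (φ : (∀ i, A i) → ℝ) (κ : ℝ)
    (hrefl : ∀ i a, a ∈ R i a) (hcard : ∀ i a, 3 ≤ (R i a).card)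
    (hpot : IsPotential A U R φ)
    (hκ : 1 / ((Cmax A R : ℝ) - 1) < κ ∧ κ ≤ 1 / 2) :
    (∀ a : ∀ i, A i, IsRecurrentClass A U R 0 κ {(a, a)}) ∧
    (∀ S : Set ((∀ i, A i) × (∀ i, A i)), IsRecurrentClass A U R 0 κ S →
      ∃ a : ∀ i, A i, S = {(a, a)}) := by
  refine ⟨fun a => ⟨Set.singleton_nonempty _, ?_, ?_, ?_⟩, ?_⟩
  · rintro x rfl i
    exact hrefl i (a i)
  · rintro x rfl y rfl
    exact Relation.ReflTransGen.refl
  · rintro x rfl y hy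
    exact eq_of_accessible_diag A U R κ a y hy
  · rintro S ⟨⟨x, hx⟩, -, hcomm, hclosed⟩
    obtain ⟨a, ha⟩ := exists_accessible_diag A U R κ x
    have haS := hclosed x hx _ ha
    exact ⟨a, Set.eq_singleton_iff_unique_mem.2
      ⟨haS, fun y hy => eq_of_accessible_diag A U R κ a y (hcomm _ haS y hy)⟩⟩
end

section
/- Consider PHPIP applied to a constrained potential game Γ satisfying Assumption 2, and let z⁰ = (a⁰,a⁰), z¹ = (a¹,a¹) ∈ diag(A) with (z⁰,z¹) ∈ E_single. Then the resistance λ(r) of the straight route r from z⁰ to z¹ is strictly smaller than 2, and λ(r) is minimal among the resistances of all positive-probability paths of {P^ε} from z⁰ to z¹. -/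
/-!
The straight route has resistance `1 + m`, where `m = max 0 (U_{i0}(a⁰) - U_{i0}(a¹))`: the
exploration costs `1`, and keeping the new action costs `m`. Reversibility of the action
sets together with `Assumption2` gives `m < 1`.

For minimality, a lower bound `h` on the cost-to-go (`costToGo`) is exhibited: `h = 1 + m` at
`(a⁰,a⁰)`, `h = 0` at `(a¹,a¹)`, `h = m` at every other state `(u,v)` both of whose entries lie in
`{a⁰, a'}` for one and the same unilateral deviation `a'` from `a⁰`, and `h = 0` elsewhere. One
step from `x` to `y` has probability at most `ε ^ (h x - h y)` (`transP_le_costToGo`), because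
* leaving `(a⁰,a⁰)` requires one exploration, and at least two (`2 ≥ 1 + m`) if more than one
  agent changes its action;
* without exploration a state with `u, v ∈ {a⁰, a'}` leads only to such states, and
  `(a¹,a¹)` can be entered from such a state only through `(a⁰,a¹)`, at cost `m`.
These bounds telescope along a path (`pathProb_le`), so every path from `(a⁰,a⁰)` to `(a¹,a¹)`
has probability at most `ε ^ (1 + m)`.
-/

open Finset Filter Topology
open scoped Classical

open PIPIPGame Finset Filter Topology

/-! ### Choice probabilities of a single agent -/

section AgentBounds

variable {n : ℕ} {A : Fin n → Type} [∀ i, DecidableEq (A i)]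
  {U : Fin n → (∀ i, A i) → ℝ} {R : ∀ i, A i → Finset (A i)} {ε κ : ℝ}
  {u v : ∀ j, A j} {i : Fin n} {c : A i}

lemma agentProb_same (hu : u i = v i) (hc : c = v i) :
    agentProb A U R ε κ u v i c = 1 - ε := by
  subst hc
  unfold agentProb
  split_ifs with hU h1 h2 h2 <;> simp_all
  ring

lemma agentProb_keep (hU : U i u ≤ U i v) (hc : c = v i) :
    agentProb A U R ε κ u v i c = 1 - ε := by
  subst hc
  unfold agentProb
  simp [hU]

lemma agentProb_keep_of_lt (hU : U i v < U i u) (hc : c = v i) (hcu : c ≠ u i) :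
    agentProb A U R ε κ u v i c = (1 - ε) * (κ * ε ^ (U i u - U i v)) := by
  subst hc
  unfold agentProb
  simp [hU.not_ge, hcu]

lemma agentProb_explore (hU : U i u ≤ U i v) (hc : c ≠ v i) (hR : c ∈ R i (v i)) :
    agentProb A U R ε κ u v i c = ε / ((R i (v i) \ {v i}).card : ℝ) := by
  unfold agentProb
  simp [hU, hc, hR]

lemma div_natCast_le (hε : 0 < ε) (k : ℕ) : ε / (k : ℝ) ≤ ε := by
  rcases Nat.eq_zero_or_pos k with rfl | hk
  · simp [hε.le]
  · exact div_le_self hε.le (by exact_mod_cast hk)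

/-- An action equal to neither of the agent's last two can only be reached by exploring. -/
lemma agentProb_le_explore (hε : 0 < ε) (hcv : c ≠ v i) (hcu : c ≠ u i) :
    agentProb A U R ε κ u v i c ≤ ε := by
  unfold agentProb
  simp only [if_neg hcv, if_neg hcu, zero_add]
  split_ifs <;> first | exact div_natCast_le hε _ | exact hε.le

lemma agentProb_nonneg_le_one (hε : 0 < ε) (hε1 : ε < 1) (hκ : 0 < κ) (hκ1 : κ ≤ 1) :
    0 ≤ agentProb A U R ε κ u v i c ∧ agentProb A U R ε κ u v i c ≤ 1 := by
  by_cases hcv : c = v i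
  · by_cases hcu : c = u i
    · rw [agentProb_same (hcu.symm.trans hcv) hcv]
      constructor <;> linarith
    rcases le_or_gt (U i u) (U i v) with hU | hU
    · rw [agentProb_keep hU hcv]
      constructor <;> linarith
    · rw [agentProb_keep_of_lt hU hcv hcu]
      have h1 : 0 < ε ^ (U i u - U i v) := Real.rpow_pos_of_pos hε _
      have h2 : ε ^ (U i u - U i v) ≤ 1 := Real.rpow_le_one hε.le hε1.le (by linarith)
      have h3 : κ * ε ^ (U i u - U i v) ≤ 1 := mul_le_one₀ hκ1 h1.le h2
      have h4 : 0 < κ * ε ^ (U i u - U i v) := by positivity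
      exact ⟨mul_nonneg (by linarith) h4.le, mul_le_one₀ (by linarith) h4.le h3⟩
  by_cases hcu : c = u i
  · subst hcu
    rcases le_or_gt (U i u) (U i v) with hU | hU
    · have h5 : agentProb A U R ε κ u v i (u i) =
          if u i ∈ R i (v i) \ {v i} then ε / ((R i (v i) \ {v i}).card : ℝ) else 0 := by
        unfold agentProb
        rw [if_pos hU, if_neg hcv, zero_add]
      rw [h5]
      split_ifs
      · exact ⟨by positivity, (div_natCast_le hε _).trans hε1.le⟩
      · simp
    · have h5 : agentProb A U R ε κ u v i (u i) =
          (1 - ε) * (1 - κ * ε ^ (U i u - U i v)) := by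
        unfold agentProb
        simp [hU.not_ge, hcv]
      rw [h5]
      have h1 : 0 < ε ^ (U i u - U i v) := Real.rpow_pos_of_pos hε _
      have h2 : ε ^ (U i u - U i v) ≤ 1 := Real.rpow_le_one hε.le hε1.le (by linarith)
      have h3 : κ * ε ^ (U i u - U i v) ≤ 1 := mul_le_one₀ hκ1 h1.le h2
      have h4 : 0 < κ * ε ^ (U i u - U i v) := by positivity
      exact ⟨mul_nonneg (by linarith) (by linarith),
        mul_le_one₀ (by linarith) (by linarith) (by linarith)⟩
  · refine ⟨?_, (agentProb_le_explore hε hcv hcu).trans hε1.le⟩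
    unfold agentProb
    simp only [if_neg hcv, if_neg hcu, zero_add]
    split_ifs <;> positivity

end AgentBounds

/-! ### Transition probabilities and the cost-to-go bound -/

section Transitions

variable {n : ℕ} {A : Fin n → Type} [∀ i, DecidableEq (A i)]
  {U : Fin n → (∀ i, A i) → ℝ} {R : ∀ i, A i → Finset (A i)} {ε κ : ℝ}

lemma transP_nonneg (hε : 0 < ε) (hε1 : ε < 1) (hκ : 0 < κ) (hκ1 : κ ≤ 1)
    (x y : (∀ j, A j) × (∀ j, A j)) : 0 ≤ transP A U R ε κ x y := by
  unfold transP
  split_ifs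
  · exact Finset.prod_nonneg fun i _ => (agentProb_nonneg_le_one hε hε1 hκ hκ1).1
  · exact le_rfl

/-- Any set of agents bounds the transition probability by the product of their choice
probabilities. -/
lemma transP_le_prod (hε : 0 < ε) (hε1 : ε < 1) (hκ : 0 < κ) (hκ1 : κ ≤ 1)
    (x y : (∀ j, A j) × (∀ j, A j)) (s : Finset (Fin n)) :
    transP A U R ε κ x y ≤ ∏ i ∈ s, agentProb A U R ε κ x.1 x.2 i (y.2 i) := by
  have h0 := fun i => (agentProb_nonneg_le_one (U := U) (R := R) (u := x.1) (v := x.2)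
    (c := y.2 i) hε hε1 hκ hκ1)
  unfold transP
  split_ifs
  · rw [← Finset.prod_mul_prod_compl s]
    exact mul_le_of_le_one_right (Finset.prod_nonneg fun i _ => (h0 i).1)
      (Finset.prod_le_one (fun i _ => (h0 i).1) fun i _ => (h0 i).2)
  · exact Finset.prod_nonneg fun i _ => (h0 i).1

/-- Both joint actions of `x` belong to `{a0, a'}` for a single unilateral deviation `a'`
(feasible or not) from `a0`. -/
def OneDeviation (a0 : ∀ j, A j) (x : (∀ j, A j) × (∀ j, A j)) : Prop :=
  ∃ (j : Fin n) (a' : ∀ j, A j), (∀ k, k ≠ j → a' k = a0 k) ∧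
    (x.1 = a0 ∨ x.1 = a') ∧ (x.2 = a0 ∨ x.2 = a')

/-- Lower bound on the resistance needed to reach `(a1, a1)`, where `m` is the resistance of
keeping the new action after the straight exploration. -/
noncomputable def costToGo (m : ℝ) (a0 a1 : ∀ j, A j) (x : (∀ j, A j) × (∀ j, A j)) : ℝ :=
  if x = (a0, a0) then 1 + m
  else if x = (a1, a1) then 0
  else if OneDeviation a0 x then m else 0

/-- Without exploration, a state built from `a0` and one unilateral deviation leads to a state of
the same kind. -/
lemma oneDeviation_step {a0 : ∀ j, A j} {x : (∀ j, A j) × (∀ j, A j)} {w : ∀ j, A j}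
    (hx : OneDeviation a0 x) (hw : ∀ k, w k = x.2 k ∨ w k = x.1 k) :
    OneDeviation a0 (x.2, w) := by
  obtain ⟨j, a', ha', hx1, hx2⟩ := hx
  refine ⟨j, a', ha', hx2, ?_⟩
  have hoff : ∀ k, k ≠ j → w k = a0 k := fun k hk => by
    have := ha' k hk
    rcases hw k with h | h <;> rcases hx1 with h1 | h1 <;> rcases hx2 with h2 | h2 <;>
      simp_all
  have hj : w j = a0 j ∨ w j = a' j := by
    rcases hw j with h | h <;> rcases hx1 with h1 | h1 <;> rcases hx2 with h2 | h2 <;>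
      simp_all
  rcases hj with hj | hj
  · left
    funext k
    by_cases hk : k = j
    · subst hk; exact hj
    · exact hoff k hk
  · right
    funext k
    by_cases hk : k = j
    · subst hk; exact hj
    · exact (hoff k hk).trans (ha' k hk).symm

variable {a0 a1 : ∀ j, A j} {i0 : Fin n}

/-- The cost-to-go bound decreases along a transition by at most its resistance. -/
lemma transP_le_costToGo (hε : 0 < ε) (hε1 : ε < 1) (hκ : 0 < κ) (hκ1 : κ ≤ 1)
    (hne : a1 i0 ≠ a0 i0) {m : ℝ}
    (hm : m = max 0 (U i0 a0 - U i0 a1)) (hm1 : m < 1) (x y : (∀ j, A j) × (∀ j, A j)) :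
    transP A U R ε κ x y ≤ ε ^ (costToGo m a0 a1 x - costToGo m a0 a1 y) := by
  have hm0 : 0 ≤ m := hm ▸ le_max_left _ _
  have hna : a1 ≠ a0 := fun h => hne (congrFun h i0)
  have hy0 : 0 ≤ costToGo m a0 a1 y := by unfold costToGo; split_ifs <;> linarith
  have hpow : ∀ {s t : ℝ}, s ≤ t → ε ^ t ≤ ε ^ s := fun h =>
    Real.rpow_le_rpow_of_exponent_ge hε hε1.le h
  -- The bound is trivial when the cost-to-go does not decrease.
  have htriv : costToGo m a0 a1 x ≤ costToGo m a0 a1 y →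
      transP A U R ε κ x y ≤ ε ^ (costToGo m a0 a1 x - costToGo m a0 a1 y) := fun h => by
    have h1 := transP_le_prod (U := U) (R := R) hε hε1 hκ hκ1 x y ∅
    have h2 := hpow (sub_nonpos.2 h)
    rw [Real.rpow_zero] at h2
    simpa using h1.trans h2
  -- One exploring agent pays for a decrease of at most `1`.
  have hone : ∀ k, y.2 k ≠ x.2 k → y.2 k ≠ x.1 k →
      costToGo m a0 a1 x - costToGo m a0 a1 y ≤ 1 →
      transP A U R ε κ x y ≤ ε ^ (costToGo m a0 a1 x - costToGo m a0 a1 y) :=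
    fun k hk2 hk1 h => by
    have h1 := transP_le_prod (U := U) (R := R) hε hε1 hκ hκ1 x y {k}
    rw [Finset.prod_singleton] at h1
    have h2 := hpow h
    rw [Real.rpow_one] at h2
    exact h1.trans ((agentProb_le_explore hε hk2 hk1).trans h2)
  by_cases hxy : y.1 = x.2
  swap
  · unfold transP
    rw [if_neg hxy]
    positivity
  by_cases hx0 : x = (a0, a0)
  · have hcx : costToGo m a0 a1 x = 1 + m := by simp [costToGo, hx0]
    subst hx0
    simp only at hxy
    by_cases hy : y.2 = a0
    · have : y = (a0, a0) := Prod.ext hxy hy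
      exact htriv (by rw [this])
    obtain ⟨k, hk⟩ := Function.ne_iff.1 hy
    by_cases hdev : ∃ j, j ≠ k ∧ y.2 j ≠ a0 j
    · -- Two agents explore at once.
      obtain ⟨j, hjk, hj⟩ := hdev
      have h1 := transP_le_prod (U := U) (R := R) hε hε1 hκ hκ1 (a0, a0) y {j, k}
      rw [Finset.prod_pair hjk] at h1
      have h2 := agentProb_le_explore (U := U) (R := R) (κ := κ) (v := a0) hε hj hj
      have h3 := agentProb_le_explore (U := U) (R := R) (κ := κ) (v := a0) hε hk hk
      have h4 := mul_le_mul h2 h3 (agentProb_nonneg_le_one hε hε1 hκ hκ1).1 hε.le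
      have h5 : ε ^ (2 : ℝ) ≤ _ :=
        hpow (show costToGo m a0 a1 (a0, a0) - costToGo m a0 a1 y ≤ 2 by linarith)
      rw [Real.rpow_two, sq] at h5
      exact h1.trans (h4.trans h5)
    · push Not at hdev
      refine hone k hk hk ?_
      have h1 : y ≠ (a0, a0) := fun h => hy (by rw [h])
      have h2 : y ≠ (a1, a1) := fun h => hna (by rw [← hxy, h])
      have h3 : OneDeviation a0 y := ⟨k, y.2, hdev, Or.inl hxy, Or.inr rfl⟩
      have : costToGo m a0 a1 y = m := by simp [costToGo, h1, h2, h3]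
      linarith
  by_cases hx1 : x = (a1, a1)
  · refine htriv (le_of_eq_of_le ?_ hy0)
    rw [costToGo, if_neg hx0, if_pos hx1]
  by_cases hxd : OneDeviation a0 x
  swap
  · refine htriv (le_of_eq_of_le ?_ hy0)
    rw [costToGo, if_neg hx0, if_neg hx1, if_neg hxd]
  have hcx : costToGo m a0 a1 x = m := by simp [costToGo, hx0, hx1, hxd]
  by_cases hw : ∀ k, y.2 k = x.2 k ∨ y.2 k = x.1 k
  swap
  · push Not at hw
    obtain ⟨k, hk2, hk1⟩ := hw
    exact hone k hk2 hk1 (by linarith)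
  have hyd : OneDeviation a0 y := by
    have := oneDeviation_step hxd hw
    rwa [← hxy] at this
  by_cases hy1 : y = (a1, a1)
  · -- The only state of this kind preceding `(a1, a1)` is `(a0, a1)`.
    have hcy : costToGo m a0 a1 y = 0 := by
      simp [costToGo, hy1, hna]
    have hxv : x.2 = a1 := by rw [← hxy, hy1]
    have hxu : x.1 = a0 := by
      obtain ⟨j, a', -, h1, h2⟩ := hxd
      rcases h1 with h1 | h1
      · exact h1
      · rcases h2 with h2 | h2
        · exact absurd (hxv.symm.trans h2) hna
        · exact absurd (Prod.ext (h1.trans (h2.symm.trans hxv)) hxv) hx1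
    rcases le_or_gt (U i0 a0) (U i0 a1) with hU | hU
    · have : m = 0 := by rw [hm]; exact max_eq_left (by linarith)
      exact htriv (by linarith)
    · have hmU : m = U i0 a0 - U i0 a1 := by rw [hm]; exact max_eq_right (by linarith)
      have h1 := transP_le_prod (U := U) (R := R) hε hε1 hκ hκ1 x y {i0}
      rw [Finset.prod_singleton, hxu, hxv, agentProb_keep_of_lt hU (by rw [hy1])
        (by rw [hy1]; exact hne), ← hmU] at h1
      rw [hcx, hcy, sub_zero]
      have h2 : 0 < ε ^ m := Real.rpow_pos_of_pos hε _
      have h3 : (1 - ε) * κ ≤ 1 := mul_le_one₀ (by linarith) hκ.le hκ1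
      rw [← mul_assoc] at h1
      exact h1.trans (mul_le_of_le_one_left h2.le h3)
  · refine htriv ?_
    rw [hcx]
    simp only [costToGo, if_neg hy1, if_pos hyd]
    split_ifs <;> linarith

/-! ### Paths and their resistances -/

/-- The one-step bounds telescope along a path. -/
lemma pathProb_le {h : (∀ j, A j) × (∀ j, A j) → ℝ} (hε : 0 < ε) (hε1 : ε < 1)
    (hκ : 0 < κ) (hκ1 : κ ≤ 1)
    (hstep : ∀ x y, transP A U R ε κ x y ≤ ε ^ (h x - h y))
    (z : (∀ j, A j) × (∀ j, A j)) (l : List ((∀ j, A j) × (∀ j, A j))) :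
    ∀ x, (x :: l).getLast? = some z →
      0 ≤ pathProb A U R ε κ (x :: l) ∧ pathProb A U R ε κ (x :: l) ≤ ε ^ (h x - h z) := by
  induction l with
  | nil =>
    intro x hx
    simp at hx
    simp [pathProb, hx]
  | cons y t ih =>
    intro x hx
    obtain ⟨h0, h1⟩ := ih y (by simpa using hx)
    have hmul : pathProb A U R ε κ (x :: y :: t) =
        transP A U R ε κ x y * pathProb A U R ε κ (y :: t) := by
      simp [pathProb]
    have ht := transP_nonneg (U := U) (R := R) hε hε1 hκ hκ1 x y
    rw [hmul]
    refine ⟨mul_nonneg ht h0, (mul_le_mul (hstep x y) h1 h0 (by positivity)).trans_eq ?_⟩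
    rw [← Real.rpow_add hε]
    congr 1
    ring

/-- A probability of order at most `ε ^ s` has resistance at least `s`. -/
lemma le_of_hasResistance {l : List ((∀ j, A j) × (∀ j, A j))} {s t : ℝ}
    (hle : ∀ ε : ℝ, 0 < ε → ε < 1 → 0 ≤ pathProb A U R ε κ l ∧ pathProb A U R ε κ l ≤ ε ^ s)
    (ht : HasResistance A U R κ l t) : s ≤ t := by
  by_contra! hlt
  obtain ⟨-, L, hL, hlim⟩ := ht
  have hIoo : ∀ᶠ ε : ℝ in 𝓝[>] (0 : ℝ), ε ∈ Set.Ioo (0 : ℝ) 1 :=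
    Ioo_mem_nhdsGT one_pos
  have hpow : Tendsto (fun ε : ℝ => ε ^ (s - t)) (𝓝[>] (0 : ℝ)) (𝓝 0) := by
    have h1 : Tendsto (fun ε : ℝ => ε ^ (s - t)) (𝓝 (0 : ℝ)) (𝓝 (0 ^ (s - t))) :=
      (Real.continuousAt_rpow_const 0 (s - t) (Or.inr (by linarith))).tendsto
    rw [Real.zero_rpow (by linarith)] at h1
    exact h1.mono_left nhdsWithin_le_nhds
  have hL0 : L ≤ 0 := by
    refine le_of_tendsto_of_tendsto hlim hpow ?_
    filter_upwards [hIoo] with ε hε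
    rw [Real.rpow_sub hε.1]
    have := Real.rpow_pos_of_pos hε.1 t
    gcongr
    exact (hle ε hε.1 hε.2).2
  linarith

/-- Resistance of the straight route. -/
lemma straight_hasResistance (hκ : 0 < κ) (hne : a1 i0 ≠ a0 i0)
    (hfeas : a1 i0 ∈ R i0 (a0 i0)) (hoff : ∀ k, k ≠ i0 → a1 k = a0 k) :
    HasResistance A U R κ [(a0, a0), (a0, a1), (a1, a1)]
      (1 + max 0 (U i0 a0 - U i0 a1)) := by
  set m := max 0 (U i0 a0 - U i0 a1) with hm
  have hm0 : 0 ≤ m := le_max_left _ _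
  set c : ℝ := ((R i0 (a0 i0) \ {a0 i0}).card : ℝ)
  have hc : 0 < c := by
    have : a1 i0 ∈ R i0 (a0 i0) \ {a0 i0} := by simp [hne, hfeas]
    exact Nat.cast_pos.2 (Finset.card_pos.2 ⟨_, this⟩)
  -- Keeping the new action has probability `(1 - ε) * κ' * ε ^ m`.
  obtain ⟨κ', hκ', hkeep⟩ : ∃ κ' : ℝ, 0 < κ' ∧ ∀ ε : ℝ,
      agentProb A U R ε κ a0 a1 i0 (a1 i0) = (1 - ε) * (κ' * ε ^ m) := by
    rcases le_or_gt (U i0 a0) (U i0 a1) with hU | hU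
    · refine ⟨1, one_pos, fun ε => ?_⟩
      have : m = 0 := by rw [hm]; exact max_eq_left (by linarith)
      rw [agentProb_keep hU rfl, this]
      simp
    · refine ⟨κ, hκ, fun ε => ?_⟩
      have : m = U i0 a0 - U i0 a1 := by rw [hm]; exact max_eq_right (by linarith)
      rw [agentProb_keep_of_lt hU rfl hne, this]
  set N := (Finset.univ.erase i0).card
  have hs1 : ∀ ε : ℝ, transP A U R ε κ (a0, a0) (a0, a1) = ε / c * (1 - ε) ^ N := fun ε => by
    unfold transP
    rw [if_pos rfl, ← Finset.mul_prod_erase _ _ (Finset.mem_univ i0)]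
    congr 1
    · exact agentProb_explore le_rfl hne hfeas
    · refine Finset.prod_eq_pow_card fun k hk => agentProb_same rfl ?_
      exact hoff k (Finset.ne_of_mem_erase hk)
  have hs2 : ∀ ε : ℝ, transP A U R ε κ (a0, a1) (a1, a1) =
      (1 - ε) * (κ' * ε ^ m) * (1 - ε) ^ N := fun ε => by
    unfold transP
    rw [if_pos rfl, ← Finset.mul_prod_erase _ _ (Finset.mem_univ i0)]
    congr 1
    · exact hkeep ε
    · refine Finset.prod_eq_pow_card fun k hk => agentProb_same ?_ rfl
      exact (hoff k (Finset.ne_of_mem_erase hk)).symm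
  refine ⟨by linarith, κ' / c, by positivity, ?_⟩
  have hlim : Tendsto (fun ε : ℝ => κ' / c * ((1 - ε) * (1 - ε) ^ N * (1 - ε) ^ N))
      (𝓝[>] (0 : ℝ)) (𝓝 (κ' / c)) := by
    have : Continuous fun ε : ℝ => κ' / c * ((1 - ε) * (1 - ε) ^ N * (1 - ε) ^ N) := by
      fun_prop
    have h := this.tendsto 0
    simp only [sub_zero, one_pow, mul_one] at h
    exact h.mono_left nhdsWithin_le_nhds
  refine hlim.congr' ?_
  filter_upwards [self_mem_nhdsWithin] with ε hε
  have hε : 0 < ε := hε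
  have hpos : 0 < ε ^ m := Real.rpow_pos_of_pos hε m
  have hP : pathProb A U R ε κ [(a0, a0), (a0, a1), (a1, a1)] =
      ε / c * (1 - ε) ^ N * ((1 - ε) * (κ' * ε ^ m) * (1 - ε) ^ N) := by
    simp [pathProb, hs1, hs2]
  rw [hP, Real.rpow_add hε, Real.rpow_one]
  field_simp

end Transitions

/-- **Lemma 3 (straight routes have minimal resistance, smaller than 2).** For
`(z⁰,z¹) ∈ E_single` (agent `i0` changing from `a0 i0` to `b`), the resistance of the
straight route `(a⁰,a⁰) → (a⁰,a¹) → (a¹,a¹)` is strictly smaller than `2` and is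
minimal among the resistances of all positive-probability paths from `z⁰` to `z¹`. -/
theorem straight_route_minimal_resistance
    {n : ℕ} (A : Fin n → Type) [∀ i, Fintype (A i)] [∀ i, DecidableEq (A i)]
    (U : Fin n → (∀ i, A i) → ℝ) (R : ∀ i, A i → Finset (A i)) (κ : ℝ)
    (hrefl : ∀ i a, a ∈ R i a)
    (h1 : Assumption1 A R) (h2 : Assumption2 A U R)
    (hκ : 1 / ((Cmax A R : ℝ) - 1) < κ ∧ κ ≤ 1 / 2)
    (a0 : ∀ i, A i) (i0 : Fin n) (b : A i0)
    (hne : b ≠ a0 i0) (hfeas : b ∈ R i0 (a0 i0)) :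
    ∃ lam : ℝ,
      HasResistance A U R κ
        [(a0, a0), (a0, Function.update a0 i0 b),
          (Function.update a0 i0 b, Function.update a0 i0 b)] lam ∧
      lam < 2 ∧
      ∀ (l : List ((∀ i, A i) × (∀ i, A i))) (lam' : ℝ),
        IsPath A U R κ (a0, a0) (Function.update a0 i0 b, Function.update a0 i0 b) l →
        HasResistance A U R κ l lam' → lam ≤ lam' := by
  have hCmax : 3 ≤ Cmax A R := by
    refine (h1.2.2 i0 (a0 i0)).trans ?_
    exact (Finset.le_sup (f := fun a : A i0 => (R i0 a).card) (Finset.mem_univ (a0 i0))).trans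
      (Finset.le_sup (f := fun i : Fin n => Finset.univ.sup fun a : A i => (R i a).card)
        (Finset.mem_univ i0))
  have hκ0 : 0 < κ := by
    have : (3 : ℝ) ≤ (Cmax A R : ℝ) := by exact_mod_cast hCmax
    exact (one_div_pos.2 (by linarith)).trans hκ.1
  have hκ1 : κ ≤ 1 := by linarith [hκ.2]
  generalize ha1 : Function.update a0 i0 b = a1
  have hb : a1 i0 = b := by simp [← ha1]
  have hoff : ∀ k, k ≠ i0 → a1 k = a0 k := fun k hk => by simp [← ha1, hk]
  subst hb
  have hm1 : max 0 (U i0 a0 - U i0 a1) < 1 :=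
    -- Reversibility makes the deviation back from `a1` to `a0` feasible.
    max_lt one_pos (h2 i0 a1 a0 ((h1.1 i0 _ _).1 hfeas) fun j hj => (hoff j hj).symm)
  refine ⟨_, straight_hasResistance hκ0 hne hfeas hoff, by linarith, ?_⟩
  rintro l lam' ⟨hhead, hlast, -⟩ hres
  obtain ⟨t, rfl⟩ : ∃ t, l = (a0, a0) :: t := by
    cases l with
    | nil => simp at hhead
    | cons x t => exact ⟨t, by simpa using hhead⟩
  refine le_of_hasResistance (fun ε hε hε1 => ?_) hres
  have h := pathProb_le hε hε1 hκ0 hκ1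
    (transP_le_costToGo (U := U) (R := R) hε hε1 hκ0 hκ1 hne rfl hm1) _ t _ hlast
  have hna : a1 ≠ a0 := fun h => hne (congrFun h i0)
  have h0 : costToGo (max 0 (U i0 a0 - U i0 a1)) a0 a1 (a0, a0) =
      1 + max 0 (U i0 a0 - U i0 a1) := by simp [costToGo]
  have h1 : costToGo (max 0 (U i0 a0 - U i0 a1)) a0 a1 (a1, a1) = 0 := by
    simp [costToGo, hna]
  rwa [h0, h1, sub_zero] at h
end

section
/- Consider PHPIP applied to a constrained potential game Γ, and let z⁰ = (a⁰,a⁰), z¹ = (a¹,a¹) ∈ diag(A) with (z⁰,z¹) ∈ E_single, where agent i is the single agent changing action. Then along the straight route from z⁰ to z¹, the resistance of the first transition (a⁰,a⁰) → (a⁰,a¹) equals 1, and the resistance of the second transition (a⁰,a¹) → (a¹,a¹) equals 0 if U_i(a¹) ≥ U_i(a⁰) and equals Δ_i = U_i(a⁰) − U_i(a¹) otherwise; consequently the resistance of the straight route equals 1 if U_i(a¹) ≥ U_i(a⁰) and equals 1 + Δ_i otherwise. -/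
/-!
Along the straight route every transition probability is exactly a positive constant times a power
of `1 - ε` times a power of `ε`, and the exponent of `ε` is the resistance
(`hasResistance_of_eq`).

In the first transition every agent other than `i0` repeats its action, with probability `1 - ε`,
while `i0` explores, with probability `ε / |R (a0 i0) \ {a0 i0}|`. In the second transition all
agents repeat. For `i0` this costs nothing or `κ ε ^ Δ`, depending on the sign of its utility
change. Another agent `j` may well lose utility from the move of `i0`, but its two previous actions
coincide, so the options "keep the new action" and "return to the old action" are the same and
their probabilities add up to `1 - ε` (`agentProb_of_eq`). The resistance of the route is the sum
of the two exponents.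
-/


open Finset Filter Topology
open scoped Classical

open PIPIPGame Finset Filter Topology

namespace PIPIPGame

variable {n : ℕ} (A : Fin n → Type) [∀ i, Fintype (A i)] [∀ i, DecidableEq (A i)]
  (U : Fin n → (∀ i, A i) → ℝ) (R : ∀ i, A i → Finset (A i))

/-- A path whose probability is `c (1 - ε) ^ m ε ^ lam` with `c > 0` has resistance `lam`. -/
lemma hasResistance_of_eq {κ : ℝ} {l : List ((∀ j, A j) × (∀ j, A j))} {lam c : ℝ} (m : ℕ)
    (hlam : 0 ≤ lam) (hc : 0 < c)
    (h : ∀ ε : ℝ, 0 < ε → pathProb A U R ε κ l = c * (1 - ε) ^ m * ε ^ lam) :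
    HasResistance A U R κ l lam := by
  refine ⟨hlam, c, hc, ?_⟩
  have hlim : Tendsto (fun ε : ℝ => c * (1 - ε) ^ m) (𝓝[>] (0 : ℝ)) (𝓝 c) := by
    have hcont : Continuous (fun ε : ℝ => c * (1 - ε) ^ m) := by fun_prop
    have h0 := hcont.tendsto 0
    simp only [sub_zero, one_pow, mul_one] at h0
    exact h0.mono_left nhdsWithin_le_nhds
  refine hlim.congr' ?_
  filter_upwards [self_mem_nhdsWithin] with ε hε
  have hε : 0 < ε := hε
  rw [h ε hε, mul_div_cancel_right₀ _ (Real.rpow_pos_of_pos hε lam).ne']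

/-- An agent whose last two actions agree repeats its action with probability `1 - ε`, whether or
not its utility has decreased. -/
lemma agentProb_of_eq (ε κ : ℝ) (a0 a1 : ∀ j, A j) (i : Fin n) (h : a1 i = a0 i) :
    agentProb A U R ε κ a0 a1 i (a1 i) = 1 - ε := by
  unfold agentProb
  split_ifs <;> simp_all
  ring

lemma agentProb_of_le (ε κ : ℝ) (a0 a1 : ∀ j, A j) (i : Fin n) (h : U i a0 ≤ U i a1) :
    agentProb A U R ε κ a0 a1 i (a1 i) = 1 - ε := by
  simp [agentProb, h]

lemma agentProb_of_lt (ε κ : ℝ) (a0 a1 : ∀ j, A j) (i : Fin n) (h : U i a1 < U i a0)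
    (hne : a1 i ≠ a0 i) :
    agentProb A U R ε κ a0 a1 i (a1 i) = (1 - ε) * (κ * ε ^ (U i a0 - U i a1)) := by
  simp [agentProb, h, hne]

lemma agentProb_explore (ε κ : ℝ) (a : ∀ j, A j) (i : Fin n) (b : A i) (hne : b ≠ a i)
    (hb : b ∈ R i (a i)) :
    agentProb A U R ε κ a a i b = ε / ((R i (a i) \ {a i}).card : ℝ) := by
  simp [agentProb, hne, hb]

lemma transP_explore (ε κ : ℝ) (a0 : ∀ i, A i) (i0 : Fin n) (b : A i0)
    (hne : b ≠ a0 i0) (hb : b ∈ R i0 (a0 i0)) :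
    transP A U R ε κ (a0, a0) (a0, Function.update a0 i0 b)
      = ((R i0 (a0 i0) \ {a0 i0}).card : ℝ)⁻¹ * (1 - ε) ^ (n - 1) * ε := by
  have hrest : ∏ i ∈ {i0}ᶜ, agentProb A U R ε κ a0 a0 i (Function.update a0 i0 b i)
      = (1 - ε) ^ (n - 1) := by
    rw [Finset.prod_congr rfl (g := fun _ => 1 - ε)]
    · simp [Finset.card_compl]
    · intro i hi
      have hi : i ≠ i0 := by simpa using hi
      rw [Function.update_of_ne hi]
      exact agentProb_of_eq A U R ε κ a0 a0 i rfl
  simp only [transP, if_true]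
  rw [Fintype.prod_eq_mul_prod_compl i0, hrest, Function.update_self,
    agentProb_explore A U R ε κ a0 i0 b hne hb]
  ring

/-- The probability of the repetition step is governed by the agent `i0` that has just moved. -/
lemma transP_repeat (ε κ : ℝ) (a0 : ∀ i, A i) (i0 : Fin n) (b : A i0) :
    transP A U R ε κ (a0, Function.update a0 i0 b)
        (Function.update a0 i0 b, Function.update a0 i0 b)
      = agentProb A U R ε κ a0 (Function.update a0 i0 b) i0 (Function.update a0 i0 b i0)
        * (1 - ε) ^ (n - 1) := by
  have hrest : ∏ i ∈ {i0}ᶜ, agentProb A U R ε κ a0 (Function.update a0 i0 b) i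
      (Function.update a0 i0 b i) = (1 - ε) ^ (n - 1) := by
    rw [Finset.prod_congr rfl (g := fun _ => 1 - ε)]
    · simp [Finset.card_compl]
    · intro i hi
      have hi : i ≠ i0 := by simpa using hi
      exact agentProb_of_eq A U R ε κ a0 _ i (Function.update_of_ne hi _ _)
  simp only [transP, if_true]
  rw [Fintype.prod_eq_mul_prod_compl i0, hrest]

end PIPIPGame

/-- **Resistances along a straight route.** For `(z⁰,z¹) ∈ E_single` with agent `i0`
changing from `a0 i0` to `b` (write `a¹ = update a⁰ i0 b`): the transition
`(a⁰,a⁰) → (a⁰,a¹)` has resistance `1`; the transition `(a⁰,a¹) → (a¹,a¹)` has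
resistance `0` if `U_{i0}(a¹) ≥ U_{i0}(a⁰)` and `Δ = U_{i0}(a⁰) − U_{i0}(a¹)`
otherwise; consequently the straight route has resistance `1`, resp. `1 + Δ`. -/
theorem straight_route_resistance_value
    {n : ℕ} (A : Fin n → Type) [∀ i, Fintype (A i)] [∀ i, DecidableEq (A i)]
    (U : Fin n → (∀ i, A i) → ℝ) (R : ∀ i, A i → Finset (A i)) (κ : ℝ)
    (hrefl : ∀ i a, a ∈ R i a) (hcard : ∀ i a, 3 ≤ (R i a).card)
    (hκ : 1 / ((Cmax A R : ℝ) - 1) < κ ∧ κ ≤ 1 / 2)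
    (a0 : ∀ i, A i) (i0 : Fin n) (b : A i0)
    (hne : b ≠ a0 i0) (hfeas : b ∈ R i0 (a0 i0)) :
    HasResistance A U R κ [(a0, a0), (a0, Function.update a0 i0 b)] 1 ∧
    (U i0 a0 ≤ U i0 (Function.update a0 i0 b) →
      HasResistance A U R κ
        [(a0, Function.update a0 i0 b),
          (Function.update a0 i0 b, Function.update a0 i0 b)] 0 ∧
      HasResistance A U R κ
        [(a0, a0), (a0, Function.update a0 i0 b),
          (Function.update a0 i0 b, Function.update a0 i0 b)] 1) ∧
    (U i0 (Function.update a0 i0 b) < U i0 a0 →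
      HasResistance A U R κ
        [(a0, Function.update a0 i0 b),
          (Function.update a0 i0 b, Function.update a0 i0 b)]
        (U i0 a0 - U i0 (Function.update a0 i0 b)) ∧
      HasResistance A U R κ
        [(a0, a0), (a0, Function.update a0 i0 b),
          (Function.update a0 i0 b, Function.update a0 i0 b)]
        (1 + (U i0 a0 - U i0 (Function.update a0 i0 b)))) := by
  -- The lower bound on `κ` gives `κ > 0` because `C ≥ 3`.
  have hκ0 : 0 < κ := by
    have h1 : (R i0 (a0 i0)).card ≤ Cmax A R :=
      (Finset.le_sup (f := fun a : A i0 => (R i0 a).card) (Finset.mem_univ (a0 i0))).trans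
        (Finset.le_sup (f := fun i : Fin n => Finset.univ.sup fun a : A i => (R i a).card)
          (Finset.mem_univ i0))
    have h2 : (3 : ℝ) ≤ (Cmax A R : ℝ) := by exact_mod_cast (hcard i0 (a0 i0)).trans h1
    have h3 : (0 : ℝ) < 1 / ((Cmax A R : ℝ) - 1) := one_div_pos.mpr (by linarith)
    exact h3.trans hκ.1
  have hcpos : (0 : ℝ) < ((R i0 (a0 i0) \ {a0 i0}).card : ℝ)⁻¹ := by
    have : 0 < (R i0 (a0 i0) \ {a0 i0}).card :=
      Finset.card_pos.mpr ⟨b, by simp [hne, hfeas]⟩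
    positivity
  have hne' : Function.update a0 i0 b i0 ≠ a0 i0 := by simpa using hne
  refine ⟨?_, fun hU => ⟨?_, ?_⟩, fun hU => ⟨?_, ?_⟩⟩
  · refine hasResistance_of_eq A U R (n - 1) zero_le_one hcpos fun ε hε => ?_
    simp [pathProb, transP_explore A U R ε κ a0 i0 b hne hfeas]
  · refine hasResistance_of_eq A U R (1 + (n - 1)) le_rfl one_pos fun ε hε => ?_
    simp only [pathProb, List.tail_cons, List.zip_cons_cons, List.zip_nil_right, List.map_cons,
      List.map_nil, List.prod_cons, List.prod_nil, transP_repeat,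
      agentProb_of_le A U R ε κ a0 _ i0 hU, Real.rpow_zero]
    ring
  · refine hasResistance_of_eq A U R ((n - 1) + (1 + (n - 1))) zero_le_one hcpos fun ε hε => ?_
    simp only [pathProb, List.tail_cons, List.zip_cons_cons, List.zip_nil_right, List.map_cons,
      List.map_nil, List.prod_cons, List.prod_nil, transP_repeat,
      transP_explore A U R ε κ a0 i0 b hne hfeas,
      agentProb_of_le A U R ε κ a0 _ i0 hU, Real.rpow_one]
    ring
  · refine hasResistance_of_eq A U R (1 + (n - 1)) (sub_nonneg.mpr hU.le) hκ0 fun ε hε => ?_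
    simp only [pathProb, List.tail_cons, List.zip_cons_cons, List.zip_nil_right, List.map_cons,
      List.map_nil, List.prod_cons, List.prod_nil, transP_repeat,
      agentProb_of_lt A U R ε κ a0 _ i0 hU hne']
    ring
  · refine hasResistance_of_eq A U R ((n - 1) + (1 + (n - 1)))
      (add_nonneg zero_le_one (sub_nonneg.mpr hU.le)) (mul_pos hcpos hκ0) fun ε hε => ?_
    simp only [pathProb, List.tail_cons, List.zip_cons_cons, List.zip_nil_right, List.map_cons,
      List.map_nil, List.prod_cons, List.prod_nil, transP_repeat,
      transP_explore A U R ε κ a0 i0 b hne hfeas,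
      agentProb_of_lt A U R ε κ a0 _ i0 hU hne']
    rw [Real.rpow_add hε, Real.rpow_one]
    ring
end

section
/- In the sensor coverage game, the utility functions U_i(a) = Σ_{q ∈ D(a_i)} W(q)/n_q(a) satisfy the potential-game identity with potential φ(a) = Σ_{q ∈ Q} Σ_{l=1}^{n_q(a)} W(q)/l: for every agent i, every joint action a ∈ A, and every alternative action a'_i ∈ A_i, U_i(a'_i, a_{-i}) − U_i(a_i, a_{-i}) = φ(a'_i, a_{-i}) − φ(a_i, a_{-i}). -/
/-!
Each agent's utility is its marginal contribution to the potential. Let `m_q` be the number of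
agents other than `i` that sense `q`. If `i` senses `q` then `n_q = m_q + 1`, and the inner sum
of the potential at `q` gains the single last term `W q / n_q`, which is what `q` contributes
to `U_i`; otherwise `n_q = m_q` and nothing changes. Hence `φ(a) = U_i(a) + φ_{-i}(a)`, where
`φ_{-i}` is the potential of the other agents (`phiCov_eq_Ucov_add_phiOthers`). As `φ_{-i}` does
not depend on the action of agent `i`, it cancels in the difference caused by a deviation of `i`.
-/

open Finset
open scoped Classical

namespace SensorCoverage

/-- The set of points of the mission space `Q` sensed from the position `p`:
those within distance `r_m` of `p`. -/
noncomputable def Dset (Q : Finset (EuclideanSpace ℝ (Fin 2))) (rm : ℝ)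
    (p : EuclideanSpace ℝ (Fin 2)) : Finset (EuclideanSpace ℝ (Fin 2)) :=
  Q.filter fun q => ‖q - p‖ ≤ rm

/-- `n_q(a)`: the number of agents sensing the point `q` under the joint action `a`. -/
noncomputable def nq {n : ℕ} (Q : Finset (EuclideanSpace ℝ (Fin 2))) (rm : ℝ)
    (a : Fin n → EuclideanSpace ℝ (Fin 2)) (q : EuclideanSpace ℝ (Fin 2)) : ℕ :=
  (Finset.univ.filter fun j : Fin n => q ∈ Dset Q rm (a j)).card

/-- Agent `i`'s utility `U_i(a) = Σ_{q ∈ D(a_i)} W(q)/n_q(a)`. -/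
noncomputable def Ucov {n : ℕ} (Q : Finset (EuclideanSpace ℝ (Fin 2)))
    (W : EuclideanSpace ℝ (Fin 2) → ℝ) (rm : ℝ) (i : Fin n)
    (a : Fin n → EuclideanSpace ℝ (Fin 2)) : ℝ :=
  ∑ q ∈ Dset Q rm (a i), W q / (nq Q rm a q : ℝ)

/-- The potential `φ(a) = Σ_{q ∈ Q} Σ_{l=1}^{n_q(a)} W(q)/l`. -/
noncomputable def phiCov {n : ℕ} (Q : Finset (EuclideanSpace ℝ (Fin 2)))
    (W : EuclideanSpace ℝ (Fin 2) → ℝ) (rm : ℝ)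
    (a : Fin n → EuclideanSpace ℝ (Fin 2)) : ℝ :=
  ∑ q ∈ Q, ∑ l ∈ Finset.Icc 1 (nq Q rm a q), W q / (l : ℝ)

end SensorCoverage

open SensorCoverage

/-- The number of agents other than `i` sensing the point `q` under the joint action `a`. -/
noncomputable def nqOthers {n : ℕ} (Q : Finset (EuclideanSpace ℝ (Fin 2))) (rm : ℝ) (i : Fin n)
    (a : Fin n → EuclideanSpace ℝ (Fin 2)) (q : EuclideanSpace ℝ (Fin 2)) : ℕ :=
  ((Finset.univ.erase i).filter fun j : Fin n => q ∈ Dset Q rm (a j)).card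

/-- The potential `φ_{-i}(a)` of the game in which agent `i` is absent. -/
noncomputable def phiOthers {n : ℕ} (Q : Finset (EuclideanSpace ℝ (Fin 2)))
    (W : EuclideanSpace ℝ (Fin 2) → ℝ) (rm : ℝ) (i : Fin n)
    (a : Fin n → EuclideanSpace ℝ (Fin 2)) : ℝ :=
  ∑ q ∈ Q, ∑ l ∈ Finset.Icc 1 (nqOthers Q rm i a q), W q / (l : ℝ)

theorem nq_eq_nqOthers_add {n : ℕ} (Q : Finset (EuclideanSpace ℝ (Fin 2))) (rm : ℝ) (i : Fin n)
    (a : Fin n → EuclideanSpace ℝ (Fin 2)) (q : EuclideanSpace ℝ (Fin 2)) :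
    nq Q rm a q = nqOthers Q rm i a q + if q ∈ Dset Q rm (a i) then 1 else 0 := by
  unfold nq nqOthers
  rw [Finset.card_filter, Finset.card_filter, Finset.sum_erase_add _ _ (Finset.mem_univ i)]

/-- The utility of agent `i` is its marginal contribution to the potential. -/
theorem phiCov_eq_Ucov_add_phiOthers {n : ℕ} (Q : Finset (EuclideanSpace ℝ (Fin 2)))
    (W : EuclideanSpace ℝ (Fin 2) → ℝ) (rm : ℝ) (i : Fin n)
    (a : Fin n → EuclideanSpace ℝ (Fin 2)) :
    phiCov Q W rm a = Ucov Q W rm i a + phiOthers Q W rm i a := by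
  have hU : Ucov Q W rm i a =
      ∑ q ∈ Q, if q ∈ Dset Q rm (a i) then W q / (nq Q rm a q : ℝ) else 0 := by
    have hD : Q.filter (fun q => q ∈ Dset Q rm (a i)) = Dset Q rm (a i) := by
      ext q
      simp [Dset]
    rw [← Finset.sum_filter, hD, Ucov]
  rw [hU, phiCov, phiOthers, ← Finset.sum_add_distrib]
  refine Finset.sum_congr rfl fun q _ => ?_
  rw [nq_eq_nqOthers_add Q rm i a q]
  split_ifs
  · rw [Finset.sum_Icc_succ_top (by omega), add_comm]
  · simp

theorem phiOthers_update {n : ℕ} (Q : Finset (EuclideanSpace ℝ (Fin 2)))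
    (W : EuclideanSpace ℝ (Fin 2) → ℝ) (rm : ℝ) (i : Fin n)
    (a : Fin n → EuclideanSpace ℝ (Fin 2)) (b : EuclideanSpace ℝ (Fin 2)) :
    phiOthers Q W rm i (Function.update a i b) = phiOthers Q W rm i a := by
  have h : ∀ q, nqOthers Q rm i (Function.update a i b) q = nqOthers Q rm i a q := fun q =>
    congrArg Finset.card <| Finset.filter_congr fun j hj => by
      rw [Function.update_of_ne (Finset.ne_of_mem_erase hj)]
  simp only [phiOthers, h]

/-- **The sensor coverage game is a potential game.** With utilities
`U_i(a) = Σ_{q ∈ D(a_i)} W(q)/n_q(a)` and potential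
`φ(a) = Σ_{q ∈ Q} Σ_{l=1}^{n_q(a)} W(q)/l`, for every agent `i`, every joint action
`a` with `a_j ∈ A_j ⊆ Q`, and every alternative action `b ∈ A_i`,
`U_i(b, a_{-i}) − U_i(a) = φ(b, a_{-i}) − φ(a)`. -/
theorem coverage_game_is_potential_game
    {n : ℕ} (Q : Finset (EuclideanSpace ℝ (Fin 2)))
    (W : EuclideanSpace ℝ (Fin 2) → ℝ) (hW : ∀ q ∈ Q, 0 ≤ W q)
    (rm : ℝ) (hrm : 0 < rm)
    (Ai : Fin n → Finset (EuclideanSpace ℝ (Fin 2))) (hAi : ∀ i, Ai i ⊆ Q)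
    (a : Fin n → EuclideanSpace ℝ (Fin 2)) (ha : ∀ j, a j ∈ Ai j)
    (i : Fin n) (b : EuclideanSpace ℝ (Fin 2)) (hb : b ∈ Ai i) :
    Ucov Q W rm i (Function.update a i b) - Ucov Q W rm i a =
      phiCov Q W rm (Function.update a i b) - phiCov Q W rm a := by
  rw [phiCov_eq_Ucov_add_phiOthers Q W rm i a,
    phiCov_eq_Ucov_add_phiOthers Q W rm i (Function.update a i b), phiOthers_update]
  ring
end
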